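/- Let E₀ > 0, let n ≥ 0 be a real number, C > 0, and let φ : ℝ → ℝ be bounded, measurable, and nonnegative with φ(x) = 0 for x < 0 and lim_{x → 0⁺} x^{−n} φ(x) = C. Define ρ(V) = (4π/V³) ∫_V^{E₀} φ(1 − E/E₀) · E² √(E²/V² − 1) dE for V ∈ (0, E₀). Then lim_{V → E₀⁻} (E₀/V − 1)^{−(n + 3/2)} · ρ(V) = 4√2 · π · C · A_n, where A_n = √π · Γ(n+1) / (2 Γ(n + 5/2)). -/

import Mathlib

open MeasureTheory Filter Topology

/-!
Write `ε = E₀ / V - 1`, so that `E₀ = V (1 + ε)`. The substitution `E = V (1 + ε (1 - s))` turns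
`1 - E / E₀` into `δ s` with `δ = ε / (1 + ε)`, and `E² / V² - 1` into
`ε (1 - s) (2 + ε (1 - s))`. Hence `ρ(V)` is `4 π ε ^ (3 / 2)` times the integral over `[0, 1]` of
`φ (δ s)` against a kernel that is bounded and converges to `√2 √(1 - s)` as `ε → 0⁺`. Since
`δ ^ (-n) φ (δ s) → C s ^ n`, with domination by a multiple of `s ^ n`, the integral is asymptotic
to `√2 C ε ^ n B(n + 1, 3 / 2)`.
-/

section Beta

lemma integral_rpow_mul_one_sub_rpow {a b : ℝ} (ha : 0 < a) (hb : 0 < b) :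
    ∫ s in (0 : ℝ)..1, s ^ (a - 1) * (1 - s) ^ (b - 1) = ProbabilityTheory.beta a b := by
  have betaIntegral_eq_ofReal : Complex.betaIntegral a b
      = ((∫ s in (0 : ℝ)..1, s ^ (a - 1) * (1 - s) ^ (b - 1) : ℝ) : ℂ) := by
    rw [Complex.betaIntegral, ← intervalIntegral.integral_ofReal]
    refine intervalIntegral.integral_congr fun s hs => ?_
    rw [Set.uIcc_of_le zero_le_one] at hs
    simp only [Complex.ofReal_mul, Complex.ofReal_cpow hs.1,
      Complex.ofReal_cpow (sub_nonneg.2 hs.2), Complex.ofReal_sub, Complex.ofReal_one]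
  rw [ProbabilityTheory.beta_eq_betaIntegralReal a b ha hb, betaIntegral_eq_ofReal,
    Complex.ofReal_re]

lemma Gamma_three_halves : Real.Gamma (3 / 2) = √Real.pi / 2 := by
  rw [show (3 / 2 : ℝ) = 1 / 2 + 1 by norm_num, Real.Gamma_add_one (by norm_num),
    Real.Gamma_one_half_eq]
  ring

lemma integral_rpow_mul_sqrt_one_sub {n : ℝ} (hn : -1 < n) :
    ∫ s in (0 : ℝ)..1, s ^ n * √(1 - s) =
      √Real.pi * Real.Gamma (n + 1) / (2 * Real.Gamma (n + 5 / 2)) := by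
  have beta_integral := integral_rpow_mul_one_sub_rpow (a := n + 1) (b := 3 / 2) (by linarith)
    (by norm_num)
  rw [add_sub_cancel_right, show (3 / 2 - 1 : ℝ) = 1 / 2 by norm_num] at beta_integral
  simp only [Real.sqrt_eq_rpow (1 - _), beta_integral, ProbabilityTheory.beta, Gamma_three_halves]
  rw [show n + 1 + 3 / 2 = n + 5 / 2 by ring]
  ring

end Beta

section Abelian

lemma eventually_nhdsGT_zero_forall_mul_Ioc {p : ℝ → Prop} (hp : ∀ᶠ x in 𝓝[>] 0, p x) :
    ∀ᶠ δ in 𝓝[>] 0, ∀ s ∈ Set.Ioc (0 : ℝ) 1, p (δ * s) := by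
  obtain ⟨η, hη, hpη⟩ := mem_nhdsGT_iff_exists_Ioo_subset.1 hp
  filter_upwards [Ioo_mem_nhdsGT hη] with δ hδ s hs
  exact hpη ⟨mul_pos hδ.1 hs.1, (mul_le_of_le_one_right hδ.1.le hs.2).trans_lt hδ.2⟩

lemma mul_rpow_neg_mul_rpow {x y : ℝ} (hx : 0 ≤ x) (hy : 0 < y) (n : ℝ) :
    (x * y) ^ (-n) * y ^ n = x ^ (-n) := by
  rw [Real.mul_rpow hx hy.le, mul_assoc, ← Real.rpow_add hy, neg_add_cancel, Real.rpow_zero,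
    mul_one]

variable {ι : Type*} {l : Filter ι} {n C : ℝ} {φ : ℝ → ℝ} {δ : ι → ℝ}

lemma tendsto_rpow_neg_mul_comp_mul (hφ : Tendsto (fun x => x ^ (-n) * φ x) (𝓝[>] 0) (𝓝 C))
    (hδ : Tendsto δ l (𝓝[>] 0)) {s : ℝ} (hs : 0 < s) :
    Tendsto (fun i => δ i ^ (-n) * φ (δ i * s)) l (𝓝 (C * s ^ n)) := by
  have scaled_pos : ∀ᶠ i in l, δ i * s ∈ Set.Ioi 0 :=
    (hδ.eventually_mem self_mem_nhdsWithin).mono fun i hi => mul_pos hi hs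
  have scaled_tendsto : Tendsto (fun i => δ i * s) l (𝓝[>] 0) :=
    tendsto_nhdsWithin_iff.2
      ⟨by simpa only [zero_mul] using (tendsto_nhds_of_tendsto_nhdsWithin hδ).mul_const s,
        scaled_pos⟩
  refine ((hφ.comp scaled_tendsto).mul_const (s ^ n)).congr' ?_
  filter_upwards [hδ.eventually_mem self_mem_nhdsWithin] with i (hi : 0 < δ i)
  rw [Function.comp_apply, mul_right_comm, mul_rpow_neg_mul_rpow hi.le hs]

lemma eventually_abs_rpow_neg_mul_comp_mul_le
    (hφ : Tendsto (fun x => x ^ (-n) * φ x) (𝓝[>] 0) (𝓝 C)) :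
    ∀ᶠ δ in 𝓝[>] 0, ∀ s ∈ Set.Ioc (0 : ℝ) 1, |δ ^ (-n) * φ (δ * s)| ≤ (|C| + 1) * s ^ n := by
  have profile_bound : ∀ᶠ x in 𝓝[>] 0, |x ^ (-n) * φ x| ≤ |C| + 1 :=
    hφ.abs.eventually_le_const (lt_add_one _)
  filter_upwards [eventually_nhdsGT_zero_forall_mul_Ioc profile_bound, self_mem_nhdsWithin]
    with δ hbound (hδ : 0 < δ) s hs
  have hsn := Real.rpow_pos_of_pos hs.1 n
  calc |δ ^ (-n) * φ (δ * s)| = |(δ * s) ^ (-n) * φ (δ * s)| * s ^ n := by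
        rw [← mul_rpow_neg_mul_rpow hδ.le hs.1, mul_right_comm, abs_mul, abs_of_pos hsn]
    _ ≤ (|C| + 1) * s ^ n := by gcongr; exact hbound s hs

lemma tendsto_rpow_neg_mul_integral_comp_mul [l.IsCountablyGenerated] {G : ι → ℝ → ℝ} {g : ℝ → ℝ}
    {K : ℝ} (hn : -1 < n) (hφm : Measurable φ)
    (hφ : Tendsto (fun x => x ^ (-n) * φ x) (𝓝[>] 0) (𝓝 C)) (hδ : Tendsto δ l (𝓝[>] 0))
    (hGm : ∀ᶠ i in l, Measurable (G i))
    (hGK : ∀ᶠ i in l, ∀ s ∈ Set.Ioc (0 : ℝ) 1, |G i s| ≤ K)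
    (hG : ∀ s ∈ Set.Ioc (0 : ℝ) 1, Tendsto (fun i => G i s) l (𝓝 (g s))) :
    Tendsto (fun i => δ i ^ (-n) * ∫ s in (0 : ℝ)..1, φ (δ i * s) * G i s) l
      (𝓝 (C * ∫ s in (0 : ℝ)..1, s ^ n * g s)) := by
  simp only [← intervalIntegral.integral_const_mul, ← mul_assoc]
  refine intervalIntegral.tendsto_integral_filter_of_dominated_convergence
    (fun s => (|C| + 1) * s ^ n * K) ?_ ?_ ?_ ?_
  · filter_upwards [hGm] with i hi
    exact Measurable.aestronglyMeasurable (by fun_prop)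
  · filter_upwards [hGK, hδ.eventually (eventually_abs_rpow_neg_mul_comp_mul_le hφ)]
      with i hGi hφi
    refine .of_forall fun s hs => ?_
    rw [Set.uIoc_of_le zero_le_one] at hs
    rw [Real.norm_eq_abs, abs_mul]
    exact mul_le_mul (hφi s hs) (hGi s hs) (abs_nonneg _) ((abs_nonneg _).trans (hφi s hs))
  · exact ((intervalIntegral.intervalIntegrable_rpow' hn).const_mul _).mul_const _
  · refine .of_forall fun s hs => ?_
    rw [Set.uIoc_of_le zero_le_one] at hs
    exact (tendsto_rpow_neg_mul_comp_mul hφ hδ hs.1).mul (hG s hs)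

end Abelian

section EnergyDensity

/-- The energy density of static isotropic Vlasov matter of unit rest mass with ansatz function `φ`
and cut-off energy `E₀`, as a function of the lapse `V`. -/
noncomputable def energyDensity (φ : ℝ → ℝ) (E₀ V : ℝ) : ℝ :=
  (4 * Real.pi / V ^ 3) * ∫ E in V..E₀, φ (1 - E / E₀) * E ^ 2 * √(E ^ 2 / V ^ 2 - 1)

/-- The weight `E² √(E² / V² - 1)` of the energy density at `E = V (1 + ε (1 - s))`, divided by
`V² √ε`; its value at `ε = 0` is the weight `√(1 - s) √2` of the limiting Beta integral. -/
noncomputable def densityKernel (ε s : ℝ) : ℝ :=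
  (1 + ε * (1 - s)) ^ 2 * (√(1 - s) * √(2 + ε * (1 - s)))

lemma continuous_densityKernel : Continuous (Function.uncurry densityKernel) := by
  unfold densityKernel Function.uncurry
  fun_prop

lemma exists_forall_abs_densityKernel_le :
    ∃ K, ∀ ε ∈ Set.Icc (0 : ℝ) 1, ∀ s ∈ Set.Icc (0 : ℝ) 1, |densityKernel ε s| ≤ K := by
  obtain ⟨K, hK⟩ := (isCompact_Icc.prod isCompact_Icc).exists_bound_of_continuousOn
    continuous_densityKernel.continuousOn
  exact ⟨K, fun ε hε s hs => hK (ε, s) ⟨hε, hs⟩⟩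

lemma sq_mul_sqrt_sq_div_sq_sub_one {V ε s : ℝ} (hV : V ≠ 0) (hε : 0 ≤ ε) (hs : s ≤ 1) :
    (V * (1 + ε * (1 - s))) ^ 2 * √((V * (1 + ε * (1 - s))) ^ 2 / V ^ 2 - 1) =
      V ^ 2 * √ε * densityKernel ε s := by
  have factored : (V * (1 + ε * (1 - s))) ^ 2 / V ^ 2 - 1
      = ε * ((1 - s) * (2 + ε * (1 - s))) := by
    field_simp
    ring
  rw [factored, Real.sqrt_mul hε, Real.sqrt_mul (sub_nonneg.2 hs), densityKernel]
  ring

lemma energyDensity_mul_one_add {V ε : ℝ} (φ : ℝ → ℝ) (hV : V ≠ 0) (hε : 0 < ε) :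
    energyDensity φ (V * (1 + ε)) V =
      4 * Real.pi * ε ^ (3 / 2 : ℝ) *
        ∫ s in (0 : ℝ)..1, φ (ε / (1 + ε) * s) * densityKernel ε s := by
  have substitution := intervalIntegral.smul_integral_comp_sub_mul (a := 0) (b := 1)
    (fun E => φ (1 - E / (V * (1 + ε))) * E ^ 2 * √(E ^ 2 / V ^ 2 - 1)) (V * ε) (V * (1 + ε))
  have integrand_eq : ∀ s ∈ Set.uIcc (0 : ℝ) 1,
      φ (1 - (V * (1 + ε) - V * ε * s) / (V * (1 + ε))) * (V * (1 + ε) - V * ε * s) ^ 2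
          * √((V * (1 + ε) - V * ε * s) ^ 2 / V ^ 2 - 1)
        = V ^ 2 * √ε * (φ (ε / (1 + ε) * s) * densityKernel ε s) := by
    intro s hs
    rw [Set.uIcc_of_le zero_le_one] at hs
    have energy_eq : V * (1 + ε) - V * ε * s = V * (1 + ε * (1 - s)) := by ring
    have argument_eq : 1 - V * (1 + ε * (1 - s)) / (V * (1 + ε)) = ε / (1 + ε) * s := by
      field_simp
      ring
    rw [energy_eq, argument_eq, mul_assoc, sq_mul_sqrt_sq_div_sq_sub_one hV hε.le hs.2]
    ring
  have lower_eq : V * (1 + ε) - V * ε * 1 = V := by ring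
  have rpow_eq : ε ^ (3 / 2 : ℝ) = ε * √ε := by
    rw [show (3 / 2 : ℝ) = 1 + 1 / 2 by norm_num, Real.rpow_add hε, Real.rpow_one,
      Real.sqrt_eq_rpow]
  rw [intervalIntegral.integral_congr integrand_eq, intervalIntegral.integral_const_mul, lower_eq,
    mul_zero, sub_zero, smul_eq_mul] at substitution
  rw [energyDensity, ← substitution, rpow_eq]
  field_simp

lemma rpow_neg_mul_energyDensity {V ε : ℝ} (φ : ℝ → ℝ) (n : ℝ) (hV : V ≠ 0) (hε : 0 < ε) :
    ε ^ (-(n + 3 / 2)) * energyDensity φ (V * (1 + ε)) V =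
      4 * Real.pi * (1 + ε) ^ (-n) *
        ((ε / (1 + ε)) ^ (-n) *
          ∫ s in (0 : ℝ)..1, φ (ε / (1 + ε) * s) * densityKernel ε s) := by
  have rpow_split : ε ^ (-(n + 3 / 2)) * ε ^ (3 / 2 : ℝ)
      = (1 + ε) ^ (-n) * (ε / (1 + ε)) ^ (-n) := by
    rw [← Real.rpow_add hε, ← Real.mul_rpow (by positivity) (by positivity),
      mul_div_cancel₀ _ (by positivity)]
    ring_nf
  rw [energyDensity_mul_one_add φ hV hε]
  linear_combination (4 * Real.pi * ∫ s in (0 : ℝ)..1,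
    φ (ε / (1 + ε) * s) * densityKernel ε s) * rpow_split

lemma tendsto_div_one_add_nhdsGT_zero :
    Tendsto (fun ε : ℝ => ε / (1 + ε)) (𝓝[>] 0) (𝓝[>] 0) := by
  have continuousAt_zero : ContinuousAt (fun ε : ℝ => ε / (1 + ε)) 0 := by
    fun_prop (disch := norm_num)
  refine tendsto_nhdsWithin_iff.2 ⟨?_, ?_⟩
  · simpa only [zero_div] using continuousAt_zero.tendsto.mono_left nhdsWithin_le_nhds
  · filter_upwards [self_mem_nhdsWithin] with ε (hε : 0 < ε)
    exact div_pos hε (by positivity)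

lemma tendsto_div_sub_one_nhdsLT {a : ℝ} (ha : 0 < a) :
    Tendsto (fun x => a / x - 1) (𝓝[<] a) (𝓝[>] 0) := by
  have continuousAt_a : ContinuousAt (fun x => a / x - 1) a := by
    fun_prop (disch := exact ha.ne')
  refine tendsto_nhdsWithin_iff.2 ⟨?_, ?_⟩
  · simpa only [div_self ha.ne', sub_self] using
      continuousAt_a.tendsto.mono_left nhdsWithin_le_nhds
  · filter_upwards [Ioo_mem_nhdsLT ha] with x hx
    exact sub_pos.2 ((one_lt_div hx.1).2 hx.2)

variable {n C : ℝ} {φ : ℝ → ℝ}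

lemma tendsto_rpow_neg_mul_integral_densityKernel (hn : -1 < n) (hφm : Measurable φ)
    (hφ : Tendsto (fun x => x ^ (-n) * φ x) (𝓝[>] 0) (𝓝 C)) :
    Tendsto (fun ε => (ε / (1 + ε)) ^ (-n) *
        ∫ s in (0 : ℝ)..1, φ (ε / (1 + ε) * s) * densityKernel ε s) (𝓝[>] 0)
      (𝓝 (C * ∫ s in (0 : ℝ)..1, s ^ n * densityKernel 0 s)) := by
  obtain ⟨K, hK⟩ := exists_forall_abs_densityKernel_le
  refine tendsto_rpow_neg_mul_integral_comp_mul (K := K) hn hφm hφ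
    tendsto_div_one_add_nhdsGT_zero (.of_forall fun ε => ?_) ?_ fun s _ => ?_
  · exact (continuous_densityKernel.uncurry_left ε).measurable
  · filter_upwards [Ioo_mem_nhdsGT one_pos] with ε hε s hs
    exact hK ε (Set.Ioo_subset_Icc_self hε) s (Set.Ioc_subset_Icc_self hs)
  · exact ((continuous_densityKernel.uncurry_right s).tendsto 0).mono_left nhdsWithin_le_nhds

lemma integral_rpow_mul_densityKernel_zero (hn : -1 < n) :
    ∫ s in (0 : ℝ)..1, s ^ n * densityKernel 0 s =
      √2 * (√Real.pi * Real.Gamma (n + 1) / (2 * Real.Gamma (n + 5 / 2))) := by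
  rw [← integral_rpow_mul_sqrt_one_sub hn, ← intervalIntegral.integral_const_mul]
  congr 1 with s
  simp only [densityKernel, zero_mul, add_zero, one_pow, one_mul]
  ring

theorem stmt_18_general {E₀ : ℝ} (hE₀ : 0 < E₀) (hn : -1 < n) (hφm : Measurable φ)
    (hφ : Tendsto (fun x => x ^ (-n) * φ x) (𝓝[>] 0) (𝓝 C)) :
    Tendsto (fun V => (E₀ / V - 1) ^ (-(n + 3 / 2)) * energyDensity φ E₀ V) (𝓝[<] E₀)
      (𝓝 (4 * √2 * Real.pi * C *
        (√Real.pi * Real.Gamma (n + 1) / (2 * Real.Gamma (n + 5 / 2))))) := by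
  have prefactor : Tendsto (fun ε : ℝ => 4 * Real.pi * (1 + ε) ^ (-n)) (𝓝[>] 0)
      (𝓝 (4 * Real.pi)) := by
    have continuousAt_zero : ContinuousAt (fun ε : ℝ => 4 * Real.pi * (1 + ε) ^ (-n)) 0 := by
      fun_prop (disch := norm_num)
    simpa using continuousAt_zero.tendsto.mono_left nhdsWithin_le_nhds
  have limit_in_ε := prefactor.mul (tendsto_rpow_neg_mul_integral_densityKernel hn hφm hφ)
  rw [integral_rpow_mul_densityKernel_zero hn] at limit_in_ε
  convert! (limit_in_ε.comp (tendsto_div_sub_one_nhdsLT hE₀)).congr' ?_ using 2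
  · ring
  · filter_upwards [Ioo_mem_nhdsLT hE₀] with V ⟨hV, hVE⟩
    have hε : 0 < E₀ / V - 1 := sub_pos.2 ((one_lt_div hV).2 hVE)
    have cutoff_eq : V * (1 + (E₀ / V - 1)) = E₀ := by
      field_simp
      ring
    have identity := rpow_neg_mul_energyDensity φ n hV.ne' hε
    rw [cutoff_eq] at identity
    exact identity.symm

end EnergyDensity

/-- Asymptotic law from Section 5.1: if `φ(x) ~ C xⁿ` as `x → 0⁺`, then
`ρ(V) ~ 4√2 π C Aₙ (E₀/V - 1)^{n+3/2}` as `V → E₀⁻`, where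
`Aₙ = √π Γ(n+1)/(2Γ(n+5/2))`. -/
theorem stmt_18 (E₀ : ℝ) (hE₀ : 0 < E₀) (n : ℝ) (hn : 0 ≤ n) (C : ℝ) (hC : 0 < C)
    (φ : ℝ → ℝ) (hmeas : Measurable φ) (hbd : ∃ M, ∀ x, |φ x| ≤ M)
    (hnn : ∀ x, 0 ≤ φ x) (hzero : ∀ x < (0 : ℝ), φ x = 0)
    (hlim : Tendsto (fun x => x ^ (-n) * φ x) (nhdsWithin 0 (Set.Ioi 0)) (nhds C))
    (ρ : ℝ → ℝ)
    (hρ : ∀ V, ρ V = (4 * Real.pi / V ^ 3) * ∫ E in V..E₀,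
        φ (1 - E / E₀) * E ^ 2 * Real.sqrt (E ^ 2 / V ^ 2 - 1)) :
    Tendsto (fun V => (E₀ / V - 1) ^ (-(n + 3/2)) * ρ V)
      (nhdsWithin E₀ (Set.Iio E₀))
      (nhds (4 * Real.sqrt 2 * Real.pi * C *
        (Real.sqrt Real.pi * Real.Gamma (n + 1) / (2 * Real.Gamma (n + 5/2))))) := by
  obtain rfl : ρ = energyDensity φ E₀ := funext hρ
  exact stmt_18_general hE₀ (by linarith) hmeas hlim
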